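/- If rad(I_A) = rad((B_1,…,B_s)) for binomials B_1,…,B_s ∈ I_A, then s ≥ m(m−1)/2; that is, the binomial arithmetical rank of the toric ideal I_A satisfies bar(I_A) ≥ m(m−1)/2. -/

import Mathlib

open MvPolynomial

variable (K : Type*) [Field K]

/-- The binomial `f_{ij} = x_i^{d_i} y_j^{d_j} − x_j^{d_j} y_i^{d_i}` in
`S = K[x_1,…,x_m,y_1,…,y_m]`, where the variable `x_i` is `X (Sum.inl i)` and
`y_i` is `X (Sum.inr i)`. -/
noncomputable def fIJ {m : ℕ} (d : Fin m → ℕ) (i j : Fin m) :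
    MvPolynomial (Fin m ⊕ Fin m) K :=
  X (Sum.inl i) ^ d i * X (Sum.inr j) ^ d j - X (Sum.inl j) ^ d j * X (Sum.inr i) ^ d i

/-- The ideal `I_2(D)` generated by the `2`-minors `f_{ij}`, `i < j`. -/
noncomputable def I2D {m : ℕ} (d : Fin m → ℕ) : Ideal (MvPolynomial (Fin m ⊕ Fin m) K) :=
  Ideal.span {g | ∃ i j : Fin m, i < j ∧ g = fIJ K d i j}

/-- A binomial: a difference of two (monic) monomials. -/
def IsBinom {K : Type*} [Field K] {σ : Type*} (f : MvPolynomial σ K) : Prop :=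
  ∃ u v : σ →₀ ℕ, f = monomial u 1 - monomial v 1

/-- The `K`-algebra homomorphism `φ : S → K[t_1,…,t_{m+1}]` with
`φ(x_i) = t_1^{b_i} t_{i+1}` and `φ(y_i) = t_{i+1}`, where `b_i = ∏_{j ≠ i} d_j`.
(Here `t_1` is `X 0` and `t_{i+1}` is `X i.succ`.) -/
noncomputable def phiA {m : ℕ} (d : Fin m → ℕ) :
    MvPolynomial (Fin m ⊕ Fin m) K →ₐ[K] MvPolynomial (Fin (m + 1)) K :=
  aeval (Sum.elim
    (fun i : Fin m => X 0 ^ (∏ j ∈ Finset.univ.erase i, d j) * X i.succ)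
    (fun i : Fin m => X i.succ))

/-- The toric ideal `I_A` of the Lawrence lifting of `(b_1,…,b_m)`. -/
noncomputable def IA {m : ℕ} (d : Fin m → ℕ) : Ideal (MvPolynomial (Fin m ⊕ Fin m) K) :=
  RingHom.ker (phiA K d).toRingHom

/-- exponent vector of the image of a monomial under `phiA` -/
noncomputable def wexp {m : ℕ} (d : Fin m → ℕ) (u : Fin m ⊕ Fin m →₀ ℕ) : Fin (m + 1) →₀ ℕ :=
  ∑ i : Fin m, (Finsupp.single 0 ((∏ j ∈ Finset.univ.erase i, d j) * u (Sum.inl i))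
    + Finsupp.single i.succ (u (Sum.inl i) + u (Sum.inr i)))

lemma wexp_zero {m : ℕ} (d : Fin m → ℕ) (u : Fin m ⊕ Fin m →₀ ℕ) :
    wexp d u 0 = ∑ i : Fin m, (∏ j ∈ Finset.univ.erase i, d j) * u (Sum.inl i) := by
  simp [wexp, Finsupp.finsetSum_apply, Finsupp.single_apply]

lemma wexp_succ {m : ℕ} (d : Fin m → ℕ) (u : Fin m ⊕ Fin m →₀ ℕ) (l : Fin m) :
    wexp d u l.succ = u (Sum.inl l) + u (Sum.inr l) := by
  simp [wexp, Finsupp.finsetSum_apply, Finsupp.single_apply, Finset.sum_add_distrib]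

lemma phiA_monomial (K : Type*) [Field K] {m : ℕ} (d : Fin m → ℕ) (u : Fin m ⊕ Fin m →₀ ℕ) :
    phiA K d (monomial u 1) = monomial (wexp d u) 1 := by
  rw [phiA, aeval_monomial, Finsupp.prod_fintype _ _ (by simp), Fintype.prod_sum_type, wexp,
    monomial_sum_one, map_one, one_mul, ← Finset.prod_mul_distrib]
  refine Finset.prod_congr rfl fun i _ => ?_
  simp only [Sum.elim_inl, Sum.elim_inr]
  rw [show (1 : K) = 1 * 1 by simp, ← monomial_mul, ← X_pow_eq_monomial, ← X_pow_eq_monomial]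
  ring

/-- kill the variables with index outside `T` -/
noncomputable def psiT (K : Type*) [Field K] {m : ℕ} (T : Finset (Fin m)) :
    MvPolynomial (Fin m ⊕ Fin m) K →ₐ[K] MvPolynomial (Fin m ⊕ Fin m) K :=
  aeval (fun s => if Sum.elim id id s ∈ T then X s else 0)

lemma psiT_monomial (K : Type*) [Field K] {m : ℕ} (T : Finset (Fin m))
    (u : Fin m ⊕ Fin m →₀ ℕ) (l : Fin m) (hl : l ∉ T) (hu : u (Sum.inl l) + u (Sum.inr l) ≠ 0) :
    psiT K T (monomial u 1) = 0 := by
  have : ∃ s, u s ≠ 0 ∧ Sum.elim id id s ∉ T := by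
    by_cases h : u (Sum.inl l) = 0
    · exact ⟨Sum.inr l, by omega, hl⟩
    · exact ⟨Sum.inl l, h, hl⟩
  obtain ⟨s, hs, hsT⟩ := this
  rw [psiT, aeval_monomial, Finsupp.prod_fintype _ _ (by simp),
    Finset.prod_eq_zero (Finset.mem_univ s), mul_zero]
  simp [hsT, hs]

lemma fIJ_mem (K : Type*) [Field K] {m : ℕ} (d : Fin m → ℕ) (i j : Fin m) :
    fIJ K d i j ∈ IA K d := by
  have key : ∀ i, (∏ k ∈ Finset.univ.erase i, d k) * d i = ∏ k, d k := fun i =>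
    Finset.prod_erase_mul _ _ (Finset.mem_univ i)
  change phiA K d (fIJ K d i j) = 0
  simp only [fIJ, phiA, map_sub, map_mul, map_pow, aeval_X, Sum.elim_inl, Sum.elim_inr, mul_pow,
    ← pow_mul, key]
  ring

lemma fIJ_ne (K : Type*) [Field K] {m : ℕ} (d : Fin m → ℕ) (hd : ∀ i, 0 < d i) (i j : Fin m)
    (hij : i ≠ j) : fIJ K d i j ≠ 0 := by
  intro h
  have := congrArg (aeval (fun s : Fin m ⊕ Fin m =>
    if s = Sum.inl i ∨ s = Sum.inr j then (1 : K) else 0)) h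
  simp [fIJ, hij, hij.symm, (hd i).ne', (hd j).ne'] at this

theorem stmt14 (m : ℕ) (hm : 2 ≤ m) (d : Fin m → ℕ) (hd : ∀ i, 0 < d i)
    (s : ℕ) (B : Fin s → MvPolynomial (Fin m ⊕ Fin m) K)
    (hB : ∀ k, IsBinom (B k) ∧ B k ∈ IA K d)
    (hrad : (IA K d).radical = (Ideal.span (Set.range B)).radical) :
    m * (m - 1) / 2 ≤ s := by
  have ex : ∀ T ∈ Finset.powersetCard 2 (Finset.univ : Finset (Fin m)),
      ∃ k, psiT K T (B k) ≠ 0 := by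
    intro T hT
    obtain ⟨i, j, hij, rfl⟩ := Finset.card_eq_two.1 (Finset.mem_powersetCard.1 hT).2
    by_contra! hk
    have h1 : fIJ K d i j ∈ (Ideal.span (Set.range B)).radical :=
      hrad ▸ Ideal.le_radical (fIJ_mem K d i j)
    obtain ⟨n, hn⟩ := h1
    have hle : Ideal.span (Set.range B) ≤ RingHom.ker (psiT K {i, j}) := by
      rw [Ideal.span_le]
      rintro _ ⟨k, rfl⟩
      exact hk k
    have h2 : psiT K {i, j} (fIJ K d i j ^ n) = 0 := hle hn
    have h3 : psiT K {i, j} (fIJ K d i j) = fIJ K d i j := by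
      simp [psiT, fIJ]
    rw [map_pow, h3] at h2
    exact fIJ_ne K d hd i j hij (eq_zero_of_pow_eq_zero h2)
  have hne : Nonempty (Fin s) := by
    obtain ⟨T, hT⟩ := (Finset.powersetCard_nonempty (n := 2)
      (s := (Finset.univ : Finset (Fin m)))).2 (by simpa using hm)
    exact ⟨(ex T hT).choose⟩
  choose! c hc using ex
  choose u v huv using fun k => (hB k).1
  have hw : ∀ k, wexp d (u k) = wexp d (v k) := by
    intro k
    have h : phiA K d (B k) = 0 := (hB k).2
    rw [huv, map_sub, phiA_monomial, phiA_monomial, sub_eq_zero] at h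
    exact monomial_left_injective (one_ne_zero) h
  have hsum : ∀ k l, u k (Sum.inl l) + u k (Sum.inr l) = v k (Sum.inl l) + v k (Sum.inr l) := by
    intro k l
    rw [← wexp_succ d, ← wexp_succ d, hw]
  have hsupp : ∀ k T, psiT K T (B k) ≠ 0 → ∀ l ∉ T, u k (Sum.inl l) + u k (Sum.inr l) = 0 := by
    intro k T h l hl
    by_contra hne
    apply h
    rw [huv, map_sub, psiT_monomial K T _ l hl hne,
      psiT_monomial K T _ l hl (by rwa [← hsum]), sub_zero]
  have hinj : Set.InjOn c (Finset.powersetCard 2 (Finset.univ : Finset (Fin m))) := by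
    intro T hT T' hT' hcc
    by_contra hne
    have h1 := hc T hT
    have h2 := hc T' hT'
    rw [← hcc] at h2
    have hz : ∀ l ∉ T ∩ T', u (c T) (Sum.inl l) + u (c T) (Sum.inr l) = 0 := by
      intro l hl
      rw [Finset.mem_inter, not_and_or] at hl
      exact hl.elim (hsupp _ _ h1 l) (hsupp _ _ h2 l)
    have hT2 := (Finset.mem_powersetCard.1 hT).2
    have hT2' := (Finset.mem_powersetCard.1 hT').2
    have hcard : (T ∩ T').card ≤ 1 := by
      by_contra hgt
      have e1 : T ∩ T' = T := Finset.eq_of_subset_of_card_le Finset.inter_subset_left (by omega)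
      have e2 : T ∩ T' = T' := Finset.eq_of_subset_of_card_le Finset.inter_subset_right (by omega)
      exact hne (e1.symm.trans e2)
    rw [Finset.card_le_one] at hcard
    have hinl : ∀ l, u (c T) (Sum.inl l) = v (c T) (Sum.inl l) := by
      intro l
      by_cases hl : l ∈ T ∩ T'
      · have h0 : wexp d (u (c T)) 0 = wexp d (v (c T)) 0 := by rw [hw]
        rw [wexp_zero, wexp_zero] at h0
        have ho : ∀ b, b ≠ l → b ∉ T ∩ T' := fun b hb hb' => hb (hcard b hb' l hl)
        rw [Finset.sum_eq_single l, Finset.sum_eq_single l] at h0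
        · exact Nat.eq_of_mul_eq_mul_left (Finset.prod_pos fun j _ => hd j) h0
        · intro b _ hb
          have := hz b (ho b hb)
          have := hsum (c T) b
          rw [show v (c T) (Sum.inl b) = 0 by omega, mul_zero]
        · simp
        · intro b _ hb
          have := hz b (ho b hb)
          rw [show u (c T) (Sum.inl b) = 0 by omega, mul_zero]
        · simp
      · have := hz l hl
        have := hsum (c T) l
        omega
    apply h1
    have : u (c T) = v (c T) := by
      ext (l | l)
      · exact hinl l
      · have := hinl l
        have := hsum (c T) l
        omega
    rw [huv, this, sub_self, map_zero]
  have := Finset.card_le_card_of_injOn (t := Finset.univ) c (fun _ _ => Finset.mem_coe.2 (Finset.mem_univ _)) hinj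
  rw [Finset.card_powersetCard, Finset.card_univ, Finset.card_univ, Fintype.card_fin,
    Fintype.card_fin, Nat.choose_two_right] at this
  exact this
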